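/- If two gentle algebras A and A′ are AG-equivalent, then gl.dim A < ∞ if and only if gl.dim A′ < ∞. -/

import Mathlib

open MulOpposite DirectSum

set_option autoImplicit false

/-- The combinatorial data of a finite quiver together with a set of
length-two relations (`rel a b` means that the length-two path `a·b` lies in
the admissible ideal `I`). -/
structure GentleData : Type 1 where
  V : Type
  A : Type
  [fintypeV : Fintype V]
  [fintypeA : Fintype A]
  [decEqV : DecidableEq V]
  [decEqA : DecidableEq A]
  src : A → V
  tgt : A → V
  rel : A → A → Prop

attribute [instance] GentleData.fintypeV GentleData.fintypeA GentleData.decEqV GentleData.decEqA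

/-- The gentleness conditions on a bound quiver `(Q, I)`:
relations are composable length-two paths; at most two arrows start
(resp. end) at every vertex; for every arrow `β` there is at most one arrow `α`
with `αβ ∉ I` and at most one with `αβ ∈ I`, and dually; and there is a bound
on the length of paths avoiding relations (admissibility). -/
def IsGentle (Q : GentleData) : Prop :=
  (∀ a b, Q.rel a b → Q.tgt a = Q.src b) ∧
  (∀ v : Q.V, Set.ncard {a : Q.A | Q.src a = v} ≤ 2) ∧
  (∀ v : Q.V, Set.ncard {a : Q.A | Q.tgt a = v} ≤ 2) ∧
  (∀ b : Q.A, Set.ncard {a : Q.A | Q.tgt a = Q.src b ∧ ¬ Q.rel a b} ≤ 1) ∧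
  (∀ b : Q.A, Set.ncard {a : Q.A | Q.tgt a = Q.src b ∧ Q.rel a b} ≤ 1) ∧
  (∀ a : Q.A, Set.ncard {b : Q.A | Q.src b = Q.tgt a ∧ ¬ Q.rel a b} ≤ 1) ∧
  (∀ a : Q.A, Set.ncard {b : Q.A | Q.src b = Q.tgt a ∧ Q.rel a b} ≤ 1) ∧
  (∃ N : ℕ, ∀ p : ℕ → Q.A, ¬ ∀ i, i < N → (Q.tgt (p i) = Q.src (p (i+1)) ∧ ¬ Q.rel (p i) (p (i+1))))

/-- Generators of the path algebra: one generator for each vertex (the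
corresponding trivial path) and one for each arrow. -/
inductive GenSym (Q : GentleData) : Type
  | vertex : Q.V → GenSym Q
  | arrow : Q.A → GenSym Q

/-- The defining relations of the algebra `kQ/I`: the trivial paths are
orthogonal idempotents summing to `1`, arrows are compatible with the trivial
paths at their source and target, and the chosen length-two paths vanish. -/
inductive GentleRel (k : Type) [Field k] (Q : GentleData) :
    FreeAlgebra k (GenSym Q) → FreeAlgebra k (GenSym Q) → Prop
  | idem (v : Q.V) : GentleRel k Q
      (FreeAlgebra.ι k (GenSym.vertex v) * FreeAlgebra.ι k (GenSym.vertex v))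
      (FreeAlgebra.ι k (GenSym.vertex v))
  | orth (v w : Q.V) (h : v ≠ w) : GentleRel k Q
      (FreeAlgebra.ι k (GenSym.vertex v) * FreeAlgebra.ι k (GenSym.vertex w)) 0
  | sum_idem : GentleRel k Q (∑ v : Q.V, FreeAlgebra.ι k (GenSym.vertex v)) 1
  | src_mul (a : Q.A) : GentleRel k Q
      (FreeAlgebra.ι k (GenSym.vertex (Q.src a)) * FreeAlgebra.ι k (GenSym.arrow a))
      (FreeAlgebra.ι k (GenSym.arrow a))
  | mul_tgt (a : Q.A) : GentleRel k Q
      (FreeAlgebra.ι k (GenSym.arrow a) * FreeAlgebra.ι k (GenSym.vertex (Q.tgt a)))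
      (FreeAlgebra.ι k (GenSym.arrow a))
  | relation (a b : Q.A) (h : Q.rel a b) : GentleRel k Q
      (FreeAlgebra.ι k (GenSym.arrow a) * FreeAlgebra.ι k (GenSym.arrow b)) 0

/-- The algebra `A = kQ/I` presented by the bound quiver `Q`. -/
abbrev GentleAlgebra (k : Type) [Field k] (Q : GentleData) : Type :=
  RingQuot (GentleRel k Q)

/-- The image in `kQ/I` of a generator. -/
noncomputable def ofGen (k : Type) [Field k] (Q : GentleData) (x : GenSym Q) :
    GentleAlgebra k Q :=
  RingQuot.mkAlgHom k (GentleRel k Q) (FreeAlgebra.ι k x)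

/-- The idempotent `e_v ∈ kQ/I` of a vertex `v`. -/
noncomputable def idemOf (k : Type) [Field k] (Q : GentleData) (v : Q.V) :
    GentleAlgebra k Q :=
  ofGen k Q (GenSym.vertex v)

/-- The element of `kQ/I` given by an arrow `a`. -/
noncomputable def arrOf (k : Type) [Field k] (Q : GentleData) (a : Q.A) :
    GentleAlgebra k Q :=
  ofGen k Q (GenSym.arrow a)

/-- The indecomposable projective right module `e_v A`, as a right submodule
(i.e. `Aᵐᵒᵖ`-submodule) of `A`. -/
noncomputable def vertexModule (k : Type) [Field k] (Q : GentleData) (v : Q.V) :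
    Submodule (GentleAlgebra k Q)ᵐᵒᵖ (GentleAlgebra k Q) :=
  Submodule.span (GentleAlgebra k Q)ᵐᵒᵖ {idemOf k Q v}

/-- The right module `αA` generated by an arrow `α`, as a right submodule of `A`. -/
noncomputable def arrowModule (k : Type) [Field k] (Q : GentleData) (a : Q.A) :
    Submodule (GentleAlgebra k Q)ᵐᵒᵖ (GentleAlgebra k Q) :=
  Submodule.span (GentleAlgebra k Q)ᵐᵒᵖ {arrOf k Q a}

/-- An oriented cycle `c` of length `ℓ` with full relations:
`t(cᵢ) = s(cᵢ₊₁)` and `cᵢ cᵢ₊₁ ∈ I` for all `i` (indices modulo `ℓ`). -/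
def IsOCFCycle (Q : GentleData) {ℓ : ℕ} (c : ZMod ℓ → Q.A) : Prop :=
  ∀ i : ZMod ℓ, Q.tgt (c i) = Q.src (c (i + 1)) ∧ Q.rel (c i) (c (i + 1))

/-- The arrow `a` lies on some oriented cycle with full relations. -/
def OnOCFCycle (Q : GentleData) (a : Q.A) : Prop :=
  ∃ ℓ : ℕ, 1 ≤ ℓ ∧ ∃ c : ZMod ℓ → Q.A, IsOCFCycle Q c ∧ ∃ i : ZMod ℓ, c i = a

/-- The whole quiver `(Q, I)` is an oriented cycle of some length `ℓ ≥ 1` with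
full relations. -/
def QuiverIsOCF (Q : GentleData) : Prop :=
  ∃ ℓ : ℕ, 1 ≤ ℓ ∧ ∃ (e : Q.V ≃ ZMod ℓ) (f : Q.A ≃ ZMod ℓ),
    (∀ a, e (Q.src a) = f a) ∧ (∀ a, e (Q.tgt a) = f a + 1) ∧
    (∀ a b, Q.rel a b ↔ f b = f a + 1)

/-- The quiver `(Q, I)` is a single point: exactly one vertex and no arrows. -/
def QuiverIsPoint (Q : GentleData) : Prop :=
  (∃ v : Q.V, ∀ w : Q.V, w = v) ∧ IsEmpty Q.A

/-- `v` is a common vertex of two distinct oriented cycles with full relations. -/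
def TwoCyclesAt (Q : GentleData) (v : Q.V) : Prop :=
  ∃ (ℓ ℓ' : ℕ), 1 ≤ ℓ ∧ 1 ≤ ℓ' ∧ ∃ (c : ZMod ℓ → Q.A) (c' : ZMod ℓ' → Q.A),
    IsOCFCycle Q c ∧ IsOCFCycle Q c' ∧ Function.Injective c ∧ Function.Injective c' ∧
    (∃ i, Q.tgt (c i) = v) ∧ (∃ j, Q.tgt (c' j) = v) ∧ Set.range c ≠ Set.range c'

/-- The set of vertices lying on an oriented cycle with full relations. -/
def ocfVertexSet (Q : GentleData) : Set Q.V :=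
  {v | ∃ a : Q.A, OnOCFCycle Q a ∧ Q.tgt a = v}

/-- Oriented cycles with full relations, identified up to cyclic rotation. -/
def ocfCycleSetoid (Q : GentleData) (ℓ : ℕ) :
    Setoid {c : ZMod ℓ → Q.A // IsOCFCycle Q c ∧ Function.Injective c} where
  r c c' := ∃ t : ZMod ℓ, ∀ i, c'.1 i = c.1 (i + t)
  iseqv := by
    refine ⟨fun c => ⟨0, fun i => by rw [add_zero]⟩, ?_, ?_⟩
    · rintro c c' ⟨t, ht⟩
      exact ⟨-t, fun i => by rw [ht (i + -t), neg_add_cancel_right]⟩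
    · rintro a b c ⟨t, ht⟩ ⟨s, hs⟩
      exact ⟨s + t, fun i => by rw [hs i, ht (i + s), add_assoc]⟩

/-- `AGzero Q ℓ` is the value `φ_A(0, ℓ)` of the AG-invariant: the number of
oriented cycles of length `ℓ` with full relations, counted up to rotation. -/
noncomputable def AGzero (Q : GentleData) (ℓ : ℕ) : ℕ :=
  Nat.card (Quotient (ocfCycleSetoid Q ℓ))

/-- A (nontrivial) forbidden path with arrows `p 0, …, p (m-1)`:
all consecutive length-two subpaths lie in `I`. -/
def IsForbiddenPath (Q : GentleData) (m : ℕ) (p : ℕ → Q.A) : Prop :=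
  ∀ i : ℕ, i + 1 < m → Q.tgt (p i) = Q.src (p (i + 1)) ∧ Q.rel (p i) (p (i + 1))

/-- A (nontrivial) forbidden thread: a maximal forbidden path (of `m ≥ 1`
arrows), i.e. one which cannot be extended on either side. -/
def IsForbiddenThread (Q : GentleData) (m : ℕ) (p : ℕ → Q.A) : Prop :=
  1 ≤ m ∧ IsForbiddenPath Q m p ∧
  (∀ b : Q.A, Q.tgt b = Q.src (p 0) → ¬ Q.rel b (p 0)) ∧
  (∀ b : Q.A, Q.src b = Q.tgt (p (m - 1)) → ¬ Q.rel (p (m - 1)) b)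

/-- A trivial forbidden thread at a vertex `v` (of length `0`). -/
def IsTrivialForbiddenThread (Q : GentleData) (v : Q.V) : Prop :=
  ({a : Q.A | Q.tgt a = v} = ∅) ∨ ({a : Q.A | Q.src a = v} = ∅) ∨
  (∃ b b' : Q.A, {a : Q.A | Q.tgt a = v} = {b} ∧ {a : Q.A | Q.src a = v} = {b'} ∧ ¬ Q.rel b b')

/-- The set of lengths of the forbidden threads of finite length. -/
def finiteForbiddenThreadLengths (Q : GentleData) : Set ℕ∞ :=
  {n : ℕ∞ | (n = 0 ∧ ∃ v : Q.V, IsTrivialForbiddenThread Q v) ∨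
    (∃ m : ℕ, n = (m : ℕ∞) ∧ ∃ p : ℕ → Q.A, IsForbiddenThread Q m p)}

/-- The set of lengths of all forbidden threads; an oriented cycle with full
relations gives rise to a forbidden thread of infinite length. -/
def forbiddenThreadLengths (Q : GentleData) : Set ℕ∞ :=
  finiteForbiddenThreadLengths Q ∪
    {n : ℕ∞ | n = ⊤ ∧ ∃ ℓ : ℕ, 1 ≤ ℓ ∧ ∃ c : ZMod ℓ → Q.A, IsOCFCycle Q c}

section Dimensions

/-- `projDimLE R n M` : the `R`-module `M` admits a projective resolution of
length at most `n`. -/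
def projDimLE (R : Type) [Ring R] (n : ℕ) (M : Type) [AddCommGroup M] [Module R M] : Prop :=
  ∃ (P : ℕ → ModuleCat.{0} R) (d : ∀ i : ℕ, ↥(P (i + 1)) →ₗ[R] ↥(P i)) (ε : ↥(P 0) →ₗ[R] M),
    (∀ i, Module.Projective R ↥(P i)) ∧
    Function.Surjective ε ∧ Function.Exact (d 0) ε ∧
    (∀ i, Function.Exact (d (i + 1)) (d i)) ∧
    (∀ i, n ≤ i → Subsingleton ↥(P (i + 1)))

/-- `injDimLE R n M` : the `R`-module `M` admits an injective coresolution of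
length at most `n`. -/
def injDimLE (R : Type) [Ring R] (n : ℕ) (M : Type) [AddCommGroup M] [Module R M] : Prop :=
  ∃ (E : ℕ → ModuleCat.{0} R) (d : ∀ i : ℕ, ↥(E i) →ₗ[R] ↥(E (i + 1))) (ι : M →ₗ[R] ↥(E 0)),
    (∀ i, Module.Injective R ↥(E i)) ∧
    Function.Injective ι ∧ Function.Exact ι (d 0) ∧
    (∀ i, Function.Exact (d i) (d (i + 1))) ∧
    (∀ i, n ≤ i → Subsingleton ↥(E (i + 1)))

/-- The projective dimension of a module, in `ℕ∞`. -/
noncomputable def projDim (R : Type) [Ring R] (M : Type) [AddCommGroup M] [Module R M] : ℕ∞ :=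
  sInf {n : ℕ∞ | ∃ m : ℕ, n = (m : ℕ∞) ∧ projDimLE R m M}

/-- The injective dimension of a module, in `ℕ∞`. -/
noncomputable def injDim (R : Type) [Ring R] (M : Type) [AddCommGroup M] [Module R M] : ℕ∞ :=
  sInf {n : ℕ∞ | ∃ m : ℕ, n = (m : ℕ∞) ∧ injDimLE R m M}

/-- The global dimension of a ring: the supremum of the projective dimensions
of all finitely generated modules. -/
noncomputable def globalDim (R : Type) [Ring R] : ℕ∞ :=
  ⨆ (M : ModuleCat.{0} R) (_ : Module.Finite R ↥M), projDim R ↥M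

/-- The left self-injective dimension: the injective dimension of `R` as a
left module over itself. -/
noncomputable def leftSelfInjDim (R : Type) [Ring R] : ℕ∞ := injDim R R

/-- The right self-injective dimension: the injective dimension of `R` as a
right module over itself. -/
noncomputable def rightSelfInjDim (R : Type) [Ring R] : ℕ∞ := injDim Rᵐᵒᵖ R

end Dimensions

section Radical

/-- The radical of a module: the intersection of its maximal submodules. -/
def radMod (R : Type) [Ring R] (M : Type) [AddCommGroup M] [Module R M] : Submodule R M :=
  sInf {N : Submodule R M | IsCoatom N}

/-- The top of a module: the quotient by its radical. -/
abbrev topMod (R : Type) [Ring R] (M : Type) [AddCommGroup M] [Module R M] : Type :=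
  M ⧸ radMod R M

/-- The socle of a module: the sum of its simple submodules. -/
def socMod (R : Type) [Ring R] (M : Type) [AddCommGroup M] [Module R M] : Submodule R M :=
  sSup {N : Submodule R M | IsAtom N}

/-- The simple right `A`-module `S(v)` at a vertex `v`, realized as the top of
the indecomposable projective `e_v A`. -/
noncomputable abbrev SimpleAt (k : Type) [Field k] (Q : GentleData) (v : Q.V) : Type :=
  topMod (GentleAlgebra k Q)ᵐᵒᵖ ↥(vertexModule k Q v)

end Radical

section Gorenstein

/-- An indecomposable module: nontrivial, and admitting no nontrivial direct
sum decomposition. -/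
def IndecomposableModule (R : Type) [Ring R] (M : Type) [AddCommGroup M] [Module R M] : Prop :=
  Nontrivial M ∧ ∀ N N' : Submodule R M, IsCompl N N' → N = ⊥ ∨ N' = ⊥

/-- A Gorenstein projective module: a syzygy of an acyclic complex of
projective modules which remains acyclic after applying `Hom(−, R)`. -/
def IsGorensteinProjective (R : Type) [Ring R] (G : Type) [AddCommGroup G] [Module R G] :
    Prop :=
  ∃ (P : ℤ → ModuleCat.{0} R) (d : ∀ n : ℤ, ↥(P n) →ₗ[R] ↥(P (n + 1))),
    (∀ n, Module.Projective R ↥(P n)) ∧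
    (∀ n, Function.Exact (d n) (d (n + 1))) ∧
    (∀ n : ℤ, Function.Exact
      (fun g : ↥(P (n + 1 + 1)) →ₗ[R] R => g ∘ₗ d (n + 1))
      (fun g : ↥(P (n + 1)) →ₗ[R] R => g ∘ₗ d n)) ∧
    Nonempty (G ≃ₗ[R] ↥(LinearMap.range (d (-1))))

/-- An indecomposable non-projective Gorenstein projective module. -/
def IsIndecNonProjGP (R : Type) [Ring R] (M : Type) [AddCommGroup M] [Module R M] : Prop :=
  IndecomposableModule R M ∧ IsGorensteinProjective R M ∧ ¬ Module.Projective R M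

/-- An indecomposable Gorenstein projective module. -/
def IsIndecGP (R : Type) [Ring R] (M : Type) [AddCommGroup M] [Module R M] : Prop :=
  IndecomposableModule R M ∧ IsGorensteinProjective R M

/-- Indecomposable non-projective Gorenstein projective right `A`-modules
(realized as right submodules of `A`), up to isomorphism. -/
noncomputable def npgpSetoid (k : Type) [Field k] (Q : GentleData) :
    Setoid {N : Submodule (GentleAlgebra k Q)ᵐᵒᵖ (GentleAlgebra k Q) //
      IsIndecNonProjGP (GentleAlgebra k Q)ᵐᵒᵖ ↥N} where
  r N N' := Nonempty (↥N.1 ≃ₗ[(GentleAlgebra k Q)ᵐᵒᵖ] ↥N'.1)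
  iseqv := ⟨fun _ => ⟨LinearEquiv.refl _ _⟩, fun ⟨e⟩ => ⟨e.symm⟩, fun ⟨e⟩ ⟨f⟩ => ⟨e.trans f⟩⟩

/-- The number of isomorphism classes of indecomposable non-projective
Gorenstein projective right `A`-modules. -/
noncomputable def numIndecNonProjGP (k : Type) [Field k] (Q : GentleData) : ℕ :=
  Nat.card (Quotient (npgpSetoid k Q))

/-- Indecomposable Gorenstein projective right `A`-modules (realized as right
submodules of `A`), up to isomorphism. -/
noncomputable def gpSetoid (k : Type) [Field k] (Q : GentleData) :
    Setoid {N : Submodule (GentleAlgebra k Q)ᵐᵒᵖ (GentleAlgebra k Q) //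
      IsIndecGP (GentleAlgebra k Q)ᵐᵒᵖ ↥N} where
  r N N' := Nonempty (↥N.1 ≃ₗ[(GentleAlgebra k Q)ᵐᵒᵖ] ↥N'.1)
  iseqv := ⟨fun _ => ⟨LinearEquiv.refl _ _⟩, fun ⟨e⟩ => ⟨e.symm⟩, fun ⟨e⟩ ⟨f⟩ => ⟨e.trans f⟩⟩

end Gorenstein

section Strings

/-- A walk in the quiver: `len` letters, the `i`-th letter (for `1 ≤ i ≤ len`)
joining the vertex `vtx (i-1)` to `vtx i`; a letter `(a, true)` is the arrow
`a` read forwards (direct), and `(a, false)` is its formal inverse. -/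
structure StrWalk (Q : GentleData) : Type where
  len : ℕ
  vtx : ℕ → Q.V
  letter : ℕ → Q.A × Bool

/-- The walk is a string: letters join consecutive vertices, the walk is
reduced (no `a a⁻` nor `a⁻ a`), and it avoids the relations. -/
def IsString (Q : GentleData) (w : StrWalk Q) : Prop :=
  (∀ i : ℕ, 1 ≤ i → i ≤ w.len →
    ((w.letter i).2 = true →
      Q.src (w.letter i).1 = w.vtx (i - 1) ∧ Q.tgt (w.letter i).1 = w.vtx i) ∧
    ((w.letter i).2 = false →
      Q.tgt (w.letter i).1 = w.vtx (i - 1) ∧ Q.src (w.letter i).1 = w.vtx i)) ∧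
  (∀ i : ℕ, 1 ≤ i → i + 1 ≤ w.len →
    (¬ ((w.letter i).1 = (w.letter (i + 1)).1 ∧ (w.letter i).2 ≠ (w.letter (i + 1)).2)) ∧
    ((w.letter i).2 = true → (w.letter (i + 1)).2 = true →
      ¬ Q.rel (w.letter i).1 (w.letter (i + 1)).1) ∧
    ((w.letter i).2 = false → (w.letter (i + 1)).2 = false →
      ¬ Q.rel (w.letter (i + 1)).1 (w.letter i).1))

/-- `M` is the string module `M(w)` of the string `w`: it has a `k`-basis
indexed by the vertices `0, …, len` of the walk, the idempotent of a vertex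
fixes exactly the basis vectors sitting at that vertex, and an arrow moves
basis vectors along the corresponding letters of the walk. -/
def IsStringModule (k : Type) [Field k] (Q : GentleData) (w : StrWalk Q) (M : Type)
    [AddCommGroup M] [Module k M] [Module (GentleAlgebra k Q)ᵐᵒᵖ M] : Prop :=
  (∀ (c : k) (m : M), (algebraMap k (GentleAlgebra k Q)ᵐᵒᵖ c) • m = c • m) ∧
  ∃ b : ℕ → M,
    LinearIndependent k (fun i : Fin (w.len + 1) => b i) ∧
    Submodule.span k (b '' {i : ℕ | i ≤ w.len}) = ⊤ ∧
    (∀ i : ℕ, i ≤ w.len → ∀ v : Q.V,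
      (op (idemOf k Q v)) • b i = if w.vtx i = v then b i else 0) ∧
    (∀ i : ℕ, i ≤ w.len → ∀ a : Q.A,
      (op (arrOf k Q a)) • b i =
        (if i + 1 ≤ w.len ∧ w.letter (i + 1) = (a, true) then b (i + 1) else 0) +
        (if 1 ≤ i ∧ w.letter i = (a, false) then b (i - 1) else 0))

/-- The vertex at position `i` is a source of the walk: the adjacent letters
point away from it. -/
def sourceAt (Q : GentleData) (w : StrWalk Q) (i : ℕ) : Prop :=
  i ≤ w.len ∧ (i = 0 ∨ (w.letter i).2 = false) ∧ (i = w.len ∨ (w.letter (i + 1)).2 = true)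

/-- The vertex at position `i` is a sink of the walk: the adjacent letters
point towards it. -/
def sinkAt (Q : GentleData) (w : StrWalk Q) (i : ℕ) : Prop :=
  i ≤ w.len ∧ (i = 0 ∨ (w.letter i).2 = true) ∧ (i = w.len ∨ (w.letter (i + 1)).2 = false)

/-- Left maximality of the inverse prefix (letters `1, …, i`) of a walk of the
shape "inverse prefix followed by direct suffix": the underlying direct path
out of the vertex at position `i` cannot be prolonged (and, when the prefix is
trivial, no second arrow leaves the starting vertex). -/
def LeftMaxAt (Q : GentleData) (w : StrWalk Q) (i : ℕ) : Prop :=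
  if 1 ≤ i then ∀ α : Q.A, Q.src α = w.vtx 0 → Q.rel (w.letter 1).1 α
  else ∀ α : Q.A, Q.src α = w.vtx 0 → (1 ≤ w.len ∧ α = (w.letter 1).1)

/-- Right maximality of the direct suffix (letters `i+1, …, len`) of a walk of
the shape "inverse prefix followed by direct suffix". -/
def RightMaxAt (Q : GentleData) (w : StrWalk Q) (i : ℕ) : Prop :=
  if i < w.len then ∀ β : Q.A, Q.src β = w.vtx w.len → Q.rel (w.letter w.len).1 β
  else ∀ β : Q.A, Q.src β = w.vtx w.len → (1 ≤ w.len ∧ β = (w.letter w.len).1)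

end Strings

section PDim
open CategoryTheory

/-- projective dimension `< n`, unbundled -/
def PDlt (R : Type) [Ring R] (M : Type) [AddCommGroup M] [Module R M] (n : ℕ) : Prop :=
  HasProjectiveDimensionLT (ModuleCat.of R M) n

variable {R : Type} [Ring R] {M N K : Type} [AddCommGroup M] [Module R M]
  [AddCommGroup N] [Module R N] [AddCommGroup K] [Module R K]

theorem PDlt.mono {m n : ℕ} (h : PDlt R M m) (hmn : m ≤ n) : PDlt R M n :=
  have : HasProjectiveDimensionLT (ModuleCat.of R M) m := h
  hasProjectiveDimensionLT_of_ge _ m n hmn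

theorem PDlt.of_equiv (e : M ≃ₗ[R] N) {n : ℕ} (h : PDlt R M n) : PDlt R N n :=
  have : HasProjectiveDimensionLT (ModuleCat.of R M) n := h
  hasProjectiveDimensionLT_of_iso e.toModuleIso n

theorem PDlt_one_iff : PDlt R M 1 ↔ Module.Projective R M := by
  rw [PDlt, ← projective_iff_hasProjectiveDimensionLT_one]
  exact (IsProjective.iff_projective M).symm

theorem PDlt_zero [Subsingleton M] : PDlt R M 0 :=
  Limits.IsZero.hasProjectiveDimensionLT_zero (ModuleCat.isZero_of_subsingleton _)

theorem ses_shortExact (f : K →ₗ[R] M) (g : M →ₗ[R] N) (hf : Function.Injective f)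
    (hfg : Function.Exact f g) (hg : Function.Surjective g) :
    (ShortComplex.mk (ModuleCat.ofHom f) (ModuleCat.ofHom g) (by
      ext x; exact hfg.apply_apply_eq_zero x) : ShortComplex (ModuleCat.{0} R)).ShortExact where
  exact := by
    rw [ShortComplex.ShortExact.moduleCat_exact_iff_function_exact]
    exact hfg
  mono_f := (ModuleCat.mono_iff_injective _).2 hf
  epi_g := (ModuleCat.epi_iff_surjective _).2 hg

theorem ker_shortExact (g : M →ₗ[R] N) (hg : Function.Surjective g) :
    (ShortComplex.mk (ModuleCat.ofHom (LinearMap.ker g).subtype) (ModuleCat.ofHom g) (by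
      ext x; exact x.2) : ShortComplex (ModuleCat.{0} R)).ShortExact :=
  ses_shortExact _ _ (Submodule.subtype_injective _) (LinearMap.exact_subtype_ker_map g) hg

/-- extensions -/
theorem PDlt.ext (g : M →ₗ[R] N) (hg : Function.Surjective g) {n : ℕ}
    (h1 : PDlt R (LinearMap.ker g) n) (h2 : PDlt R N n) : PDlt R M n :=
  (ker_shortExact g hg).hasProjectiveDimensionLT_X₂ n h1 h2

theorem PDlt.of_ker (g : M →ₗ[R] N) (hg : Function.Surjective g) [hM : Module.Projective R M]
    {n : ℕ} (h1 : PDlt R (LinearMap.ker g) n) : PDlt R N (n + 1) :=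
  (ker_shortExact g hg).hasProjectiveDimensionLT_X₃ n h1
    ((PDlt_one_iff.2 hM).mono (by omega))

theorem PDlt.ker (g : M →ₗ[R] N) (hg : Function.Surjective g) [hM : Module.Projective R M]
    {n : ℕ} (h1 : PDlt R N (n + 2)) : PDlt R (LinearMap.ker g) (n + 1) :=
  (ker_shortExact g hg).hasProjectiveDimensionLT_X₁ (n + 1)
    ((PDlt_one_iff.2 hM).mono (by omega)) h1

theorem PDlt.sup {P Q : Submodule R M} (h : Disjoint P Q) {n : ℕ}
    (hP : PDlt R P n) (hQ : PDlt R Q n) : PDlt R ↥(P ⊔ Q) n := by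
  let N' : Submodule R ↥(P ⊔ Q) := P.submoduleOf (P ⊔ Q)
  refine PDlt.ext N'.mkQ N'.mkQ_surjective ?_ ?_
  · rw [Submodule.ker_mkQ]
    exact hP.of_equiv (Submodule.submoduleOfEquivOfLe le_sup_left).symm
  · let φ : Q →ₗ[R] ↥(P ⊔ Q) ⧸ N' := N'.mkQ ∘ₗ Submodule.inclusion le_sup_right
    refine hQ.of_equiv (LinearEquiv.ofBijective φ ⟨?_, ?_⟩)
    · rw [← LinearMap.ker_eq_bot, LinearMap.ker_eq_bot']
      intro x hx
      have hx' : (Submodule.inclusion le_sup_right x : ↥(P ⊔ Q)) ∈ N' := by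
        simpa [φ] using hx
      have : (x : M) ∈ P := hx'
      have h0 := (Submodule.disjoint_def.1 h) x this x.2
      exact Subtype.ext h0
    · intro y
      obtain ⟨⟨y, hy⟩, rfl⟩ := N'.mkQ_surjective y
      obtain ⟨p, hp, q, hq, rfl⟩ := Submodule.mem_sup.1 hy
      refine ⟨⟨q, hq⟩, ?_⟩
      simp only [φ, LinearMap.comp_apply]
      rw [← sub_eq_zero, ← map_sub]
      simp only [Submodule.mkQ_apply, Submodule.Quotient.mk_eq_zero]
      show _ ∈ P
      simpa using hp

theorem projDimLE_of_PDlt (n : ℕ) : ∀ (M : Type) [AddCommGroup M] [Module R M],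
    PDlt R M (n + 1) → projDimLE R n M := by
  induction n with
  | zero =>
    intro M _ _ h
    have hM := PDlt_one_iff.1 h
    let P : ℕ → ModuleCat.{0} R := fun i => match i with
      | 0 => ModuleCat.of R M
      | _ + 1 => ModuleCat.of R PUnit
    refine ⟨P, fun i => 0, (LinearMap.id : M →ₗ[R] M), ?_, ?_, ?_, ?_, ?_⟩
    · rintro (_ | i)
      · exact hM
      · show Module.Projective R PUnit; infer_instance
    · exact fun x => ⟨x, rfl⟩
    · intro x
      constructor
      · intro hx; exact ⟨0, hx.symm⟩
      · rintro ⟨y, hy⟩; exact hy.symm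
    · intro i x
      constructor
      · intro _; exact ⟨0, Subsingleton.elim (α := PUnit) _ _⟩
      · intro _; rfl
    · intro i _
      show Subsingleton PUnit; infer_instance
  | succ n ih =>
    intro M _ _ h
    let F := M →₀ R
    let g : F →ₗ[R] M := Finsupp.linearCombination R id
    have hg : Function.Surjective g := Finsupp.linearCombination_id_surjective R M
    obtain ⟨P, d, ε, h1, h2, h3, h4, h5⟩ := ih _ (PDlt.ker g hg h)
    let P' : ℕ → ModuleCat.{0} R := fun i => match i with
      | 0 => ModuleCat.of R F
      | i + 1 => P i
    let d' : ∀ i : ℕ, ↥(P' (i + 1)) →ₗ[R] ↥(P' i) := fun i => match i with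
      | 0 => (LinearMap.ker g).subtype ∘ₗ ε
      | i + 1 => d i
    refine ⟨P', d', g, ?_, hg, ?_, ?_, ?_⟩
    · rintro (_ | i)
      · show Module.Projective R F; infer_instance
      · exact h1 i
    · intro x
      constructor
      · intro hx
        obtain ⟨y, hy⟩ := h2 ⟨x, hx⟩
        exact ⟨y, congrArg Subtype.val hy⟩
      · rintro ⟨y, rfl⟩; exact (ε y).2
    · rintro (_ | i)
      · intro x
        rw [← h3 x]
        exact ⟨fun h => Subtype.ext h, fun h => congrArg Subtype.val h⟩
      · exact h4 i
    · rintro (_ | i) hi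
      · omega
      · exact h5 i (by omega)

theorem PDlt_of_projDimLE (n : ℕ) : ∀ (M : Type) [AddCommGroup M] [Module R M],
    projDimLE R n M → PDlt R M (n + 1) := by
  induction n with
  | zero =>
    rintro M _ _ ⟨P, d, ε, h1, h2, h3, h4, h5⟩
    have h0 := h5 0 le_rfl
    have hinj : Function.Injective ε := by
      rw [← LinearMap.ker_eq_bot, LinearMap.ker_eq_bot']
      intro x hx
      obtain ⟨y, rfl⟩ := (h3 x).1 hx
      rw [Subsingleton.elim y 0, map_zero]
    have := h1 0
    exact PDlt_one_iff.2 (Module.Projective.of_equiv (LinearEquiv.ofBijective ε ⟨hinj, h2⟩))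
  | succ n ih =>
    rintro M _ _ ⟨P, d, ε, h1, h2, h3, h4, h5⟩
    have := h1 0
    refine PDlt.of_ker ε h2 (ih _ ?_)
    refine ⟨fun i => P (i + 1), fun i => d (i + 1),
      (d 0).codRestrict _ (fun x => (h3 _).2 ⟨x, rfl⟩), fun i => h1 _, ?_, ?_,
      fun i => h4 _, fun i hi => h5 _ (by omega)⟩
    · rintro ⟨x, hx⟩
      obtain ⟨y, rfl⟩ := (h3 x).1 hx
      exact ⟨y, rfl⟩
    · intro x
      rw [← h4 0 x]
      exact ⟨fun h => congrArg Subtype.val h, fun h => Subtype.ext h⟩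

theorem globalDim_lt_top_of {n : ℕ} (h : ∀ (M : Type) [AddCommGroup M] [Module R M],
    Module.Finite R M → PDlt R M (n + 1)) : globalDim R < ⊤ := by
  refine lt_of_le_of_lt (b := (n : ℕ∞)) ?_ (ENat.natCast_lt_top n)
  refine iSup_le fun M => iSup_le fun hM => sInf_le ⟨n, rfl, projDimLE_of_PDlt n _ (h M hM)⟩

theorem exists_PDlt_of_globalDim (h : globalDim R < ⊤) [hM : Module.Finite R M] :
    ∃ n, PDlt R M (n + 1) := by
  have h1 : projDim R M ≤ globalDim R :=
    le_iSup_of_le (ModuleCat.of R M) (le_iSup_of_le hM le_rfl)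
  have h2 := lt_of_le_of_lt h1 h
  by_contra hc
  push Not at hc
  refine absurd h2 ?_
  have : {n : ℕ∞ | ∃ m : ℕ, n = (m : ℕ∞) ∧ projDimLE R m M} = ∅ := by
    ext x
    simp only [Set.mem_ofPred_eq, Set.mem_empty_iff_false, iff_false]
    rintro ⟨m, -, hm⟩
    exact hc m (PDlt_of_projDimLE m M hm)
  rw [projDim, this, sInf_empty]
  exact lt_irrefl _

/-- pd bound on simples gives a bound on finite length modules -/
theorem PDlt_of_finiteLength {n : ℕ} (h : ∀ (S : Type) [AddCommGroup S] [Module R S],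
    IsSimpleModule R S → PDlt R S n) (hM : IsFiniteLength R M) : PDlt R M n := by
  induction hM with
  | of_subsingleton => exact PDlt_zero.mono (Nat.zero_le _)
  | @of_simple_quotient M _ _ N hs _ ih =>
    refine PDlt.ext N.mkQ N.mkQ_surjective ?_ (h _ hs)
    rw [Submodule.ker_mkQ]; exact ih

end PDim

section PathBasis
open Classical

variable {k : Type} [Field k] {Q : GentleData}

theorem idem_idem (v : Q.V) : idemOf k Q v * idemOf k Q v = idemOf k Q v := by
  have := RingQuot.mkAlgHom_rel k (GentleRel.idem (k := k) v)
  simp only [map_mul] at this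
  exact this

theorem idem_orth {v w : Q.V} (h : v ≠ w) : idemOf k Q v * idemOf k Q w = 0 := by
  have := RingQuot.mkAlgHom_rel k (GentleRel.orth (k := k) v w h)
  simp only [map_mul, map_zero] at this
  exact this

theorem sum_idem : ∑ v : Q.V, idemOf k Q v = 1 := by
  have := RingQuot.mkAlgHom_rel k (GentleRel.sum_idem (k := k) (Q := Q))
  simp only [map_sum, map_one] at this
  exact this

theorem idem_arr (a : Q.A) : idemOf k Q (Q.src a) * arrOf k Q a = arrOf k Q a := by
  have := RingQuot.mkAlgHom_rel k (GentleRel.src_mul (k := k) a)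
  simp only [map_mul] at this
  exact this

theorem arr_idem (a : Q.A) : arrOf k Q a * idemOf k Q (Q.tgt a) = arrOf k Q a := by
  have := RingQuot.mkAlgHom_rel k (GentleRel.mul_tgt (k := k) a)
  simp only [map_mul] at this
  exact this

theorem arr_arr_rel {a b : Q.A} (h : Q.rel a b) : arrOf k Q a * arrOf k Q b = 0 := by
  have := RingQuot.mkAlgHom_rel k (GentleRel.relation (k := k) a b h)
  simp only [map_mul, map_zero] at this
  exact this

theorem idem_arr_ne {v : Q.V} {a : Q.A} (h : v ≠ Q.src a) :
    idemOf k Q v * arrOf k Q a = 0 := by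
  rw [← idem_arr, ← mul_assoc, idem_orth h, zero_mul]

theorem arr_idem_ne {v : Q.V} {a : Q.A} (h : Q.tgt a ≠ v) :
    arrOf k Q a * idemOf k Q v = 0 := by
  rw [← arr_idem, mul_assoc, idem_orth h, mul_zero]

theorem arr_arr_ne {a b : Q.A} (h : Q.tgt a ≠ Q.src b) : arrOf k Q a * arrOf k Q b = 0 := by
  rw [← idem_arr b, ← mul_assoc, arr_idem_ne h, zero_mul]

/-- induction principle for elements, by left multiplication with generators -/
theorem gentle_induction {p : GentleAlgebra k Q → Prop}
    (hc : ∀ c : k, p (algebraMap k _ c))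
    (hv : ∀ v, p (idemOf k Q v)) (ha : ∀ a, p (arrOf k Q a))
    (hadd : ∀ x y, p x → p y → p (x + y)) (hmul : ∀ x y, p x → p y → p (x * y)) (x) : p x := by
  obtain ⟨y, rfl⟩ := RingQuot.mkAlgHom_surjective k (GentleRel k Q) x
  induction y using FreeAlgebra.induction with
  | grade0 r => rw [AlgHom.commutes]; exact hc r
  | grade1 x =>
    cases x with
    | vertex v => exact hv v
    | arrow a => exact ha a
  | add a b h1 h2 => rw [map_add]; exact hadd _ _ h1 h2
  | mul a b h1 h2 => rw [map_mul]; exact hmul _ _ h1 h2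

/-- formal paths: a list of arrows together with an end vertex -/
abbrev FP (Q : GentleData) : Type := List Q.A × Q.V

def FP.start (p : FP Q) : Q.V := match p.1 with
  | [] => p.2
  | a :: _ => Q.src a

/-- `a` may be put in front of `p`. -/
def FP.ok (a : Q.A) (p : FP Q) : Prop :=
  Q.tgt a = FP.start p ∧ ∀ b ∈ p.1.head?, ¬ Q.rel a b

variable (k) in
noncomputable def actV (v : Q.V) : Module.End k (FP Q →₀ k) :=
  Finsupp.linearCombination k
    (fun p : FP Q => if FP.start p = v then Finsupp.single p (1 : k) else 0)

variable (k) in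
noncomputable def actA (a : Q.A) : Module.End k (FP Q →₀ k) :=
  Finsupp.linearCombination k
    (fun p : FP Q => if FP.ok a p then Finsupp.single (a :: p.1, p.2) (1 : k) else 0)

theorem actV_single (v : Q.V) (p : FP Q) :
    actV k v (Finsupp.single p 1) = if FP.start p = v then Finsupp.single p (1 : k) else 0 := by
  simp [actV]

theorem actA_single (a : Q.A) (p : FP Q) : actA k a (Finsupp.single p 1) =
    if FP.ok a p then Finsupp.single (a :: p.1, p.2) (1 : k) else 0 := by
  simp [actA]

variable (k Q) in
noncomputable def actGen : GenSym Q → Module.End k (FP Q →₀ k)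
  | .vertex v => actV k v
  | .arrow a => actA k a

theorem end_ext {f g : Module.End k (FP Q →₀ k)}
    (h : ∀ p, f (Finsupp.single p 1) = g (Finsupp.single p 1)) : f = g :=
  Finsupp.lhom_ext' fun p => LinearMap.ext_ring (h p)

variable (k Q) in
noncomputable def rho : GentleAlgebra k Q →ₐ[k] Module.End k (FP Q →₀ k) :=
  RingQuot.liftAlgHom k ⟨FreeAlgebra.lift k (actGen k Q), by
    intro x y h
    induction h with
    | idem v =>
      simp only [map_mul, FreeAlgebra.lift_ι_apply, actGen]
      refine end_ext fun p => ?_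
      rw [Module.End.mul_apply, actV_single]
      split_ifs with h
      · rw [actV_single, if_pos h]
      · simp
    | orth v w hvw =>
      simp only [map_mul, map_zero, FreeAlgebra.lift_ι_apply, actGen]
      refine end_ext fun p => ?_
      rw [Module.End.mul_apply, actV_single]
      split_ifs with h
      · rw [actV_single, if_neg (fun h' => hvw (h'.symm.trans h))]; rfl
      · simp
    | sum_idem =>
      simp only [map_sum, map_one, FreeAlgebra.lift_ι_apply, actGen]
      refine end_ext fun p => ?_
      rw [LinearMap.sum_apply]
      simp [actV_single]
    | src_mul a =>
      simp only [map_mul, FreeAlgebra.lift_ι_apply, actGen]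
      refine end_ext fun p => ?_
      rw [Module.End.mul_apply, actA_single]
      split_ifs with h
      · rw [actV_single, if_pos (show FP.start (a :: p.1, p.2) = Q.src a from rfl)]
      · simp
    | mul_tgt a =>
      simp only [map_mul, FreeAlgebra.lift_ι_apply, actGen]
      refine end_ext fun p => ?_
      rw [Module.End.mul_apply, actV_single]
      split_ifs with h
      · rfl
      · rw [actA_single, if_neg (fun h' => h h'.1.symm)]; simp
    | relation a b hab =>
      simp only [map_mul, map_zero, FreeAlgebra.lift_ι_apply, actGen]
      refine end_ext fun p => ?_
      rw [Module.End.mul_apply, actA_single]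
      split_ifs with h
      · rw [actA_single, if_neg (fun h' => h'.2 b (by simp) hab)]; rfl
      · simp⟩

theorem rho_idem (v : Q.V) : rho k Q (idemOf k Q v) = actV k v := by
  simp [rho, idemOf, ofGen, actGen]

theorem rho_arr (a : Q.A) : rho k Q (arrOf k Q a) = actA k a := by
  simp [rho, arrOf, ofGen, actGen]

/-- the element of the algebra given by a formal path -/
noncomputable def pathEl (k : Type) [Field k] {Q : GentleData} : List Q.A → Q.V → GentleAlgebra k Q
  | [], w => idemOf k Q w
  | a :: l, w => arrOf k Q a * pathEl k l w

variable (k Q) in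
noncomputable def psi : (FP Q →₀ k) →ₗ[k] GentleAlgebra k Q :=
  Finsupp.linearCombination k (fun p : FP Q => pathEl k p.1 p.2)

theorem psi_single (p : FP Q) : psi k Q (Finsupp.single p 1) = pathEl k p.1 p.2 := by
  simp [psi]

theorem psi_rho (x : GentleAlgebra k Q) : ∀ f, psi k Q (rho k Q x f) = x * psi k Q f := by
  induction x using gentle_induction with
  | hc c => intro f; simp [Algebra.algebraMap_eq_smul_one]
  | hv v =>
    suffices psi k Q ∘ₗ (actV k v) = LinearMap.mulLeft k (idemOf k Q v) ∘ₗ psi k Q by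
      intro f; rw [rho_idem]; exact LinearMap.congr_fun this f
    refine Finsupp.lhom_ext' fun p => LinearMap.ext_ring ?_
    obtain ⟨l, w⟩ := p
    simp only [LinearMap.comp_apply, Finsupp.lsingle_apply, LinearMap.mulLeft_apply, actV_single,
      psi_single]
    split_ifs with h
    · rw [psi_single]
      subst h
      rcases l with _ | ⟨b, l⟩
      · exact idem_idem w |>.symm
      · show arrOf k Q b * _ = idemOf k Q (Q.src b) * (arrOf k Q b * _)
        rw [← mul_assoc, idem_arr]
    · rw [map_zero]
      rcases l with _ | ⟨b, l⟩
      · exact (idem_orth (Ne.symm h)).symm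
      · show 0 = idemOf k Q v * (arrOf k Q b * _)
        rw [← mul_assoc, idem_arr_ne (Ne.symm h), zero_mul]
  | ha a =>
    suffices psi k Q ∘ₗ (actA k a) = LinearMap.mulLeft k (arrOf k Q a) ∘ₗ psi k Q by
      intro f; rw [rho_arr]; exact LinearMap.congr_fun this f
    refine Finsupp.lhom_ext' fun p => LinearMap.ext_ring ?_
    obtain ⟨l, w⟩ := p
    simp only [LinearMap.comp_apply, Finsupp.lsingle_apply, LinearMap.mulLeft_apply, actA_single,
      psi_single]
    split_ifs with h
    · rw [psi_single]; rfl
    · rw [map_zero]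
      rcases l with _ | ⟨b, l⟩
      · have : Q.tgt a ≠ w := fun h' => h ⟨h', by simp⟩
        exact (arr_idem_ne this).symm
      · simp only [pathEl]
        rw [← mul_assoc]
        by_cases h1 : Q.tgt a = Q.src b
        · have : Q.rel a b := by
            by_contra h2
            exact h ⟨h1, by simpa using h2⟩
          rw [arr_arr_rel this, zero_mul]
        · rw [arr_arr_ne h1, zero_mul]
  | hadd x y hx hy => intro f; simp [hx, hy, add_mul]
  | hmul x y hx hy => intro f; simp [hx, hy, mul_assoc]

variable (k Q) in
noncomputable def unitF : FP Q →₀ k := ∑ w : Q.V, Finsupp.single (([] : List Q.A), w) 1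

variable (k Q) in
/-- coordinates -/
noncomputable def theta : GentleAlgebra k Q →ₗ[k] (FP Q →₀ k) :=
  (LinearMap.applyₗ (unitF k Q)) ∘ₗ (rho k Q).toLinearMap

theorem theta_apply (x : GentleAlgebra k Q) : theta k Q x = rho k Q x (unitF k Q) := rfl

theorem psi_theta (x : GentleAlgebra k Q) : psi k Q (theta k Q x) = x := by
  rw [theta_apply, psi_rho, unitF, map_sum]
  simp only [psi_single, pathEl]
  rw [sum_idem, mul_one]

theorem theta_mul (x y : GentleAlgebra k Q) : theta k Q (x * y) = rho k Q x (theta k Q y) := by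
  simp [theta_apply]

theorem theta_inj {x : GentleAlgebra k Q} (h : theta k Q x = 0) : x = 0 := by
  rw [← psi_theta x, h, map_zero]

theorem actA_apply_nil (a : Q.A) (f : FP Q →₀ k) (w : Q.V) : actA k a f ([], w) = 0 := by
  induction f using Finsupp.induction_linear with
  | zero => simp
  | add f g hf hg => simp [hf, hg]
  | single p c =>
    rw [← mul_one c, ← smul_eq_mul, ← Finsupp.smul_single, map_smul, actA_single]
    split_ifs <;> simp

theorem actA_apply_cons_ne {a b : Q.A} (h : b ≠ a) (f : FP Q →₀ k) (l : List Q.A) (w : Q.V) :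
    actA k a f (b :: l, w) = 0 := by
  induction f using Finsupp.induction_linear with
  | zero => simp
  | add f g hf hg => simp [hf, hg]
  | single p c =>
    rw [← mul_one c, ← smul_eq_mul, ← Finsupp.smul_single, map_smul, actA_single]
    split_ifs <;> simp [Ne.symm h]

theorem actA_apply_cons (a : Q.A) (f : FP Q →₀ k) (p : FP Q) (hp : FP.ok a p) :
    actA k a f (a :: p.1, p.2) = f p := by
  induction f using Finsupp.induction_linear with
  | zero => simp
  | add f g hf hg => simp [hf, hg]
  | single q c =>
    rw [← mul_one c, ← smul_eq_mul, ← Finsupp.smul_single, map_smul, actA_single]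
    by_cases hq : q = p
    · subst hq; simp [hp]
    · have : ¬ (q.1 = p.1 ∧ q.2 = p.2) := fun h => hq (Prod.ext h.1 h.2)
      split_ifs <;> simp [hq, this]

theorem actV_apply (v : Q.V) (f : FP Q →₀ k) (p : FP Q) :
    actV k v f p = if FP.start p = v then f p else 0 := by
  induction f using Finsupp.induction_linear with
  | zero => simp
  | add f g hf hg => simp only [map_add, Finsupp.add_apply, hf, hg]; split_ifs <;> simp
  | single q c =>
    rw [← mul_one c, ← smul_eq_mul, ← Finsupp.smul_single, map_smul, actV_single]
    by_cases hq : q = p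
    · subst hq; split_ifs <;> simp
    · split_ifs <;> simp [hq]

end PathBasis

section Modules
open Classical

variable {k : Type} [Field k] {Q : GentleData}

/-- left multiplication as a map of right modules -/
def lmul {A : Type} [Ring A] (y : A) : A →ₗ[Aᵐᵒᵖ] A where
  toFun x := y * x
  map_add' := mul_add y
  map_smul' r x := by simp [mul_assoc]

/-- the right ideal `yA` -/
def rM {A : Type} [Ring A] (y : A) : Submodule Aᵐᵒᵖ A := LinearMap.range (lmul y)

theorem mem_rM {A : Type} [Ring A] {y x : A} : x ∈ rM y ↔ ∃ z, y * z = x := Iff.rfl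

theorem projective_self {A : Type} [Ring A] : Module.Projective Aᵐᵒᵖ A := by
  let e : Aᵐᵒᵖ ≃ₗ[Aᵐᵒᵖ] A :=
    { toFun := unop, invFun := op, left_inv := fun _ => rfl, right_inv := fun _ => rfl
      map_add' := fun _ _ => rfl
      map_smul' := fun _ _ => rfl }
  exact Module.Projective.of_equiv e

theorem projective_rM {A : Type} [Ring A] {e : A} (he : e * e = e) :
    Module.Projective Aᵐᵒᵖ (rM e) := by
  have := projective_self (A := A)
  refine Module.Projective.of_split (rM e).subtype (lmul e).rangeRestrict ?_
  ext ⟨x, hx⟩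
  obtain ⟨z, rfl⟩ := mem_rM.1 hx
  show e * (e * z) = e * z
  rw [← mul_assoc, he]

/-- the map `eA → yA` for `ye = y` -/
def lmulR {A : Type} [Ring A] (e y : A) : rM e →ₗ[Aᵐᵒᵖ] rM y :=
  (lmul y).rangeRestrict ∘ₗ (rM e).subtype

theorem lmulR_surj {A : Type} [Ring A] {e y : A} (h : y * e = y) :
    Function.Surjective (lmulR e y) := by
  rintro ⟨x, hx⟩
  obtain ⟨z, rfl⟩ := mem_rM.1 hx
  refine ⟨⟨e * z, z, rfl⟩, Subtype.ext ?_⟩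
  show y * (e * z) = y * z
  rw [← mul_assoc, h]

theorem map_ker_lmulR {A : Type} [Ring A] {e y : A} (he : e * e = e)
    {K : Submodule Aᵐᵒᵖ A} (hK : ∀ x, x ∈ K ↔ e * x = x ∧ y * x = 0) :
    (LinearMap.ker (lmulR e y)).map (rM e).subtype = K := by
  ext x
  rw [hK]
  constructor
  · rintro ⟨⟨_, z, rfl⟩, h, rfl⟩
    refine ⟨?_, congrArg Subtype.val h⟩
    show e * (e * z) = e * z
    rw [← mul_assoc, he]
  · rintro ⟨h1, h2⟩
    exact ⟨⟨x, x, h1⟩, Subtype.ext h2, rfl⟩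

theorem PDlt_rM_succ {A : Type} [Ring A] {e y : A} (he : e * e = e) (h : y * e = y) {n : ℕ}
    {K : Submodule Aᵐᵒᵖ A} (hK : ∀ x, x ∈ K ↔ e * x = x ∧ y * x = 0)
    (hk : PDlt Aᵐᵒᵖ K n) : PDlt Aᵐᵒᵖ (rM y) (n + 1) :=
  have := projective_rM he
  PDlt.of_ker _ (lmulR_surj h) (hk.of_equiv
    ((Submodule.equivMapOfInjective _ (Submodule.subtype_injective _) _).trans
      (LinearEquiv.ofEq _ _ (map_ker_lmulR he hK))).symm)

theorem PDlt_ker_lmulR {A : Type} [Ring A] {e y : A} (he : e * e = e) (h : y * e = y) {n : ℕ}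
    {K : Submodule Aᵐᵒᵖ A} (hK : ∀ x, x ∈ K ↔ e * x = x ∧ y * x = 0)
    (hk : PDlt Aᵐᵒᵖ (rM y) (n + 2)) : PDlt Aᵐᵒᵖ K (n + 1) :=
  have := projective_rM he
  (PDlt.ker _ (lmulR_surj h) hk).of_equiv
    ((Submodule.equivMapOfInjective _ (Submodule.subtype_injective _) _).trans
      (LinearEquiv.ofEq _ _ (map_ker_lmulR he hK)))

theorem PDlt_simple_aux {A : Type} [Ring A] {e : A} (he : e * e = e) {n : ℕ}
    {S : Type} [AddCommGroup S] [Module Aᵐᵒᵖ S] [IsSimpleModule Aᵐᵒᵖ S] {m : S} (hm : m ≠ 0)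
    (hme : op e • m = m)
    {K : Submodule Aᵐᵒᵖ A} (hK : ∀ x, x ∈ K ↔ e * x = x ∧ op x • m = 0)
    (hk : PDlt Aᵐᵒᵖ K n) : PDlt Aᵐᵒᵖ S (n + 1) := by
  have hproj := projective_rM he
  let g0 : A →ₗ[Aᵐᵒᵖ] S :=
    { toFun := fun x => op x • m
      map_add' := fun x y => by rw [op_add, add_smul]
      map_smul' := fun r x => by
        rw [RingHom.id_apply, smul_smul]; rfl }
  let g : rM e →ₗ[Aᵐᵒᵖ] S := g0 ∘ₗ (rM e).subtype
  have hg : Function.Surjective g := by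
    rcases LinearMap.surjective_or_eq_zero g with h | h
    · exact h
    · exfalso
      have := LinearMap.congr_fun h ⟨e, 1, mul_one _⟩
      exact hm (hme.symm.trans this)
  have hker : (LinearMap.ker g).map (rM e).subtype = K := by
    ext x
    rw [hK]
    constructor
    · rintro ⟨⟨_, z, rfl⟩, h, rfl⟩
      refine ⟨?_, h⟩
      show e * (e * z) = e * z
      rw [← mul_assoc, he]
    · rintro ⟨h1, h2⟩
      exact ⟨⟨x, x, h1⟩, h2, rfl⟩
  refine PDlt.of_ker g hg (hk.of_equiv ?_)
  exact ((Submodule.equivMapOfInjective (rM e).subtype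
    (Submodule.subtype_injective _) (LinearMap.ker g)).trans (LinearEquiv.ofEq _ _ hker)).symm

theorem exists_of_projective_rM {A : Type} [Ring A] {e y : A} (he : e * e = e) (h : y * e = y)
    (hp : Module.Projective Aᵐᵒᵖ (rM y)) :
    ∃ x, y * x = y ∧ e * x = x ∧ ∀ b, y * b = 0 → x * b = 0 := by
  obtain ⟨s, hs⟩ := Module.projective_lifting_property (lmulR e y) LinearMap.id (lmulR_surj h)
  let y' : rM y := ⟨y, 1, mul_one _⟩
  refine ⟨(s y' : A), congrArg Subtype.val (LinearMap.congr_fun hs y'), ?_, ?_⟩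
  · obtain ⟨z, hz⟩ := (s y').2
    rw [← hz]
    show e * (e * z) = e * z
    rw [← mul_assoc, he]
  · intro b hb
    have : op b • y' = 0 := Subtype.ext hb
    have h := congrArg s this
    rw [map_smul, map_zero] at h
    exact congrArg Subtype.val h

theorem finite_rM {A : Type} [Ring A] (y : A) : Module.Finite Aᵐᵒᵖ (rM y) := by
  have : rM y = Submodule.span Aᵐᵒᵖ {y} := by
    ext x
    rw [mem_rM, Submodule.mem_span_singleton]
    exact ⟨fun ⟨z, h⟩ => ⟨op z, h⟩, fun ⟨z, h⟩ => ⟨unop z, h⟩⟩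
  rw [this]
  infer_instance

variable (k) in
/-- the right ideal generated by the arrows in `T` -/
noncomputable def KT (T : Finset Q.A) : Submodule (GentleAlgebra k Q)ᵐᵒᵖ (GentleAlgebra k Q) :=
  ⨆ a ∈ T, rM (arrOf k Q a)

theorem KT_empty : KT k (∅ : Finset Q.A) = ⊥ := by simp [KT]

theorem KT_insert (a : Q.A) (T : Finset Q.A) :
    KT k (insert a T) = rM (arrOf k Q a) ⊔ KT k T := Finset.iSup_insert a T _

theorem KT_singleton (a : Q.A) : KT k {a} = rM (arrOf k Q a) := by simp [KT]

theorem mul_mem_KT {a : Q.A} {T : Finset Q.A} (h : a ∈ T) (z : GentleAlgebra k Q) :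
    arrOf k Q a * z ∈ KT k T :=
  (le_iSup₂_of_le (f := fun a (_ : a ∈ T) => rM (arrOf k Q a)) a h le_rfl) ⟨z, rfl⟩

theorem KT_induction {T : Finset Q.A} {p : GentleAlgebra k Q → Prop} (h0 : p 0)
    (hadd : ∀ x y, p x → p y → p (x + y)) (h : ∀ a ∈ T, ∀ z, p (arrOf k Q a * z))
    {x : GentleAlgebra k Q} (hx : x ∈ KT k T) : p x := by
  induction T using Finset.induction_on generalizing x with
  | empty =>
    rw [KT_empty, Submodule.mem_bot] at hx
    rw [hx]; exact h0
  | insert a T _ ih =>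
    rw [KT_insert] at hx
    obtain ⟨y, ⟨z, rfl⟩, w, hw, rfl⟩ := Submodule.mem_sup.1 hx
    exact hadd _ _ (h a (by simp) z) (ih (fun b hb => h b (by simp [hb])) hw)

theorem theta_KT_nil {T : Finset Q.A} {x : GentleAlgebra k Q} (hx : x ∈ KT k T) (w : Q.V) :
    theta k Q x ([], w) = 0 := by
  refine KT_induction (p := fun x => theta k Q x ([], w) = 0) (by simp)
    (fun x y h1 h2 => by simp [h1, h2]) (fun a _ z => ?_) hx
  rw [theta_mul, rho_arr, actA_apply_nil]

theorem theta_KT_cons {T : Finset Q.A} {x : GentleAlgebra k Q} (hx : x ∈ KT k T)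
    {b : Q.A} (hb : b ∉ T) (l : List Q.A) (w : Q.V) :
    theta k Q x (b :: l, w) = 0 := by
  refine KT_induction (p := fun x => theta k Q x (b :: l, w) = 0) (by simp)
    (fun x y h1 h2 => by simp [h1, h2]) (fun a ha z => ?_) hx
  rw [theta_mul, rho_arr, actA_apply_cons_ne]
  rintro rfl; exact hb ha

theorem PDlt_KT {T : Finset Q.A} {n : ℕ}
    (h : ∀ a ∈ T, PDlt (GentleAlgebra k Q)ᵐᵒᵖ (rM (arrOf k Q a)) n) :
    PDlt (GentleAlgebra k Q)ᵐᵒᵖ (KT k T) n := by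
  induction T using Finset.induction_on with
  | empty => rw [KT_empty]; exact PDlt_zero.mono (Nat.zero_le _)
  | insert a T ha ih =>
    rw [KT_insert]
    refine PDlt.sup ?_ (h a (by simp)) (ih fun b hb => h b (by simp [hb]))
    rw [Submodule.disjoint_def]
    intro x hx hx'
    rw [← KT_singleton] at hx
    refine theta_inj (Finsupp.ext ?_)
    rintro ⟨_ | ⟨b, l⟩, w⟩
    · exact theta_KT_nil hx w
    · by_cases hb : b = a
      · subst hb; exact theta_KT_cons hx' ha l w
      · exact theta_KT_cons hx (by simpa using hb) l w

/-- elements of `e_{t(a)} A` killed by `a` -/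
theorem mem_KT_of_arr_mul_eq_zero {a : Q.A} {x : GentleAlgebra k Q}
    (hx : idemOf k Q (Q.tgt a) * x = x) (h : arrOf k Q a * x = 0) :
    x ∈ KT k (Finset.univ.filter fun b => Q.rel a b) := by
  have h1 : actV k (Q.tgt a) (theta k Q x) = theta k Q x := by
    rw [← rho_idem, ← theta_mul, hx]
  have h2 : actA k a (theta k Q x) = 0 := by
    rw [← rho_arr, ← theta_mul, h, map_zero]
  rw [← psi_theta x, psi, Finsupp.linearCombination_apply]
  refine Submodule.sum_mem _ ?_
  rintro ⟨l, w⟩ hp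
  rw [Finsupp.mem_support_iff] at hp
  have h3 : FP.start (l, w) = Q.tgt a := by
    by_contra hne
    have := DFunLike.congr_fun h1 (l, w)
    rw [actV_apply, if_neg hne] at this
    exact hp this.symm
  have h4 : ¬ FP.ok a (l, w) := by
    intro hok
    have := actA_apply_cons a (theta k Q x) _ hok
    rw [h2] at this
    exact hp this.symm
  rcases l with _ | ⟨b, l⟩
  · exact absurd ⟨h3.symm, by simp⟩ h4
  · have hrel : Q.rel a b := by
      by_contra hr
      exact h4 ⟨h3.symm, by simpa using hr⟩
    simp only [pathEl]
    rw [← mul_smul_comm]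
    exact mul_mem_KT (by simpa using hrel) _

theorem mem_KT_rel_iff (hQ : ∀ a b, Q.rel a b → Q.tgt a = Q.src b) (a : Q.A)
    (x : GentleAlgebra k Q) : x ∈ KT k (Finset.univ.filter fun b => Q.rel a b) ↔
      idemOf k Q (Q.tgt a) * x = x ∧ arrOf k Q a * x = 0 := by
  refine ⟨fun hx => ?_, fun h => mem_KT_of_arr_mul_eq_zero h.1 h.2⟩
  refine KT_induction (p := fun x => idemOf k Q (Q.tgt a) * x = x ∧ arrOf k Q a * x = 0)
    (by simp) (fun x y h1 h2 => by simp [mul_add, h1, h2]) (fun b hb z => ?_) hx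
  have hb : Q.rel a b := by simpa using hb
  rw [← mul_assoc, ← mul_assoc, arr_arr_rel hb, hQ a b hb, idem_arr, zero_mul]
  exact ⟨rfl, rfl⟩

theorem PDlt_arr_succ (hQ : ∀ a b, Q.rel a b → Q.tgt a = Q.src b) {a : Q.A} {n : ℕ}
    (h : ∀ b, Q.rel a b → PDlt (GentleAlgebra k Q)ᵐᵒᵖ (rM (arrOf k Q b)) n) :
    PDlt (GentleAlgebra k Q)ᵐᵒᵖ (rM (arrOf k Q a)) (n + 1) := by
  refine PDlt_rM_succ (idem_idem (k := k) (Q.tgt a)) (arr_idem a) (mem_KT_rel_iff hQ a)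
    (PDlt_KT fun b hb => h b ?_)
  simpa using hb

/-- `n` consecutive relations starting at `a` -/
def FPath (Q : GentleData) : Q.A → ℕ → Prop
  | _, 0 => True
  | a, n + 1 => ∃ b, Q.rel a b ∧ FPath Q b n

theorem PDlt_arr_of_not_FPath (hQ : ∀ a b, Q.rel a b → Q.tgt a = Q.src b) (n : ℕ) :
    ∀ a : Q.A, ¬ FPath Q a n → PDlt (GentleAlgebra k Q)ᵐᵒᵖ (rM (arrOf k Q a)) n := by
  induction n with
  | zero => intro a h; exact absurd trivial h
  | succ n ih =>
    intro a h
    exact PDlt_arr_succ hQ fun b hb => ih b fun hc => h ⟨b, hb, hc⟩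

/-- decomposition -/
theorem exists_decomp (v : Q.V) (x : GentleAlgebra k Q) :
    ∃ c : k, idemOf k Q v * x - c • idemOf k Q v ∈
      KT k (Finset.univ.filter fun a => Q.src a = v) := by
  rw [← psi_theta x]
  induction theta k Q x using Finsupp.induction_linear with
  | zero => exact ⟨0, by simp⟩
  | add f g hf hg =>
    obtain ⟨c, hc⟩ := hf
    obtain ⟨d, hd⟩ := hg
    refine ⟨c + d, ?_⟩
    convert add_mem hc hd using 1
    rw [map_add, mul_add, add_smul]; abel
  | single p c =>
    obtain ⟨l, w⟩ := p
    simp only [psi, Finsupp.linearCombination_single]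
    rw [mul_smul_comm]
    rcases l with _ | ⟨a, l⟩
    · simp only [pathEl]
      by_cases h : v = w
      · subst h; exact ⟨c, by rw [idem_idem, sub_self]; exact zero_mem _⟩
      · exact ⟨0, by rw [idem_orth h, smul_zero, zero_smul, sub_self]; exact zero_mem _⟩
    · refine ⟨0, ?_⟩
      simp only [pathEl]
      rw [zero_smul, sub_zero]
      by_cases h : v = Q.src a
      · rw [← mul_assoc, h, idem_arr, ← mul_smul_comm]
        exact mul_mem_KT (by simp) _
      · rw [← mul_assoc, idem_arr_ne h, zero_mul, smul_zero]; exact zero_mem _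

/-- the main non-splitting fact -/
theorem not_projective_arr {a b : Q.A} (hab : Q.rel a b) (hs : Q.tgt a = Q.src b)  :
    ¬ Module.Projective (GentleAlgebra k Q)ᵐᵒᵖ (rM (arrOf k Q a)) := by
  intro hp
  obtain ⟨x, h1, h2, h3⟩ := exists_of_projective_rM (idem_idem (Q.tgt a)) (arr_idem a) hp
  replace h3 := h3 _ (arr_arr_rel hab)
  obtain ⟨c, hc⟩ := exists_decomp (Q.tgt a) x
  rw [h2] at hc
  set y := x - c • idemOf k Q (Q.tgt a) with hy
  have hxy : x = y + c • idemOf k Q (Q.tgt a) := by rw [hy]; abel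
  have hth : ∀ e : Q.A, theta k Q (arrOf k Q e) = Finsupp.single ([e], Q.tgt e) 1 := by
    intro e
    rw [theta_apply, rho_arr, unitF, map_sum, Finset.sum_eq_single (Q.tgt e)]
    · rw [actA_single, if_pos ⟨rfl, by simp⟩]
    · intro w _ hw
      rw [actA_single, if_neg]
      intro h; exact hw h.1.symm
    · simp
  -- the coefficient `c` vanishes
  have hc0 : c = 0 := by
    have h4 : y * arrOf k Q b + c • arrOf k Q b = 0 := by
      rw [hxy, add_mul, smul_mul_assoc, hs, idem_arr] at h3; exact h3
    have h5 := DFunLike.congr_fun (congrArg (theta k Q) h4) ([b], Q.tgt b)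
    rw [map_add, map_smul, hth, map_zero, Finsupp.add_apply] at h5
    have h6 : theta k Q (y * arrOf k Q b) ([b], Q.tgt b) = 0 := by
      refine KT_induction (p := fun y => theta k Q (y * arrOf k Q b) ([b], Q.tgt b) = 0)
        (by simp) (fun x y h1 h2 => by simp [add_mul, h1, h2]) (fun e _ z => ?_) hc
      rw [mul_assoc, theta_mul, rho_arr]
      by_cases he : b = e
      · subst he
        by_cases hok : FP.ok b (([] : List Q.A), Q.tgt b)
        · rw [actA_apply_cons b _ ([], Q.tgt b) hok]
          -- coefficient of a trivial path in `z * b`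
          have key : ∀ z : GentleAlgebra k Q, theta k Q (z * arrOf k Q b) ([], Q.tgt b) = 0 := by
            intro z
            have hz : z = ∑ v, idemOf k Q v * z := by
              rw [← Finset.sum_mul, sum_idem, one_mul]
            rw [hz, Finset.sum_mul, map_sum, Finsupp.finsetSum_apply]
            refine Finset.sum_eq_zero fun v _ => ?_
            obtain ⟨d, hd⟩ := exists_decomp v z
            have : idemOf k Q v * z * arrOf k Q b =
              (idemOf k Q v * z - d • idemOf k Q v) * arrOf k Q b +
                d • (idemOf k Q v * arrOf k Q b) := by
              rw [sub_mul, smul_mul_assoc]; abel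
            rw [this, map_add, map_smul, Finsupp.add_apply]
            have e1 : theta k Q ((idemOf k Q v * z - d • idemOf k Q v) * arrOf k Q b)
                ([], Q.tgt b) = 0 :=
              theta_KT_nil (Submodule.smul_mem _ (op (arrOf k Q b)) hd) _
            have e2 : theta k Q (idemOf k Q v * arrOf k Q b) ([], Q.tgt b) = 0 := by
              by_cases hv : v = Q.src b
              · rw [hv, idem_arr, hth]; simp
              · rw [idem_arr_ne hv]; simp
            rw [e1, Finsupp.smul_apply, e2]; simp
          exact key z
        · exact absurd ⟨rfl, by simp⟩ hok
      · exact actA_apply_cons_ne he _ _ _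
    rw [h6] at h5
    simpa using h5
  -- but it is one
  have h7 := DFunLike.congr_fun (congrArg (theta k Q) h1) ([a], Q.tgt a)
  rw [theta_mul, rho_arr, hth, actA_apply_cons a _ ([], Q.tgt a) ⟨rfl, by simp⟩, hxy, hc0,
    zero_smul, add_zero, theta_KT_nil hc] at h7
  simp at h7

end Modules

section Final
open Classical

variable {k : Type} [Field k] {Q : GentleData}

/-- a nonzero vector at a vertex killed by all arrows -/
theorem exists_socle_vector (hQ : IsGentle Q) (S : Type) [AddCommGroup S]
    [Module (GentleAlgebra k Q)ᵐᵒᵖ S] [Nontrivial S] :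
    ∃ (m : S) (v : Q.V), m ≠ 0 ∧ op (idemOf k Q v) • m = m ∧
      ∀ a, op (arrOf k Q a) • m = 0 := by
  by_contra hc
  push Not at hc
  have hex : ∀ m : S, m ≠ 0 → ∃ v, op (idemOf k Q v) • m ≠ 0 := by
    intro m hm
    by_contra h
    push Not at h
    apply hm
    have : (op (1 : GentleAlgebra k Q)) • m = 0 := by
      rw [← sum_idem, Finset.op_sum, Finset.sum_smul]
      exact Finset.sum_eq_zero fun v _ => h v
    simpa using this
  -- arrows
  have harr : ∀ m : S, ∀ v, m ≠ 0 → op (idemOf k Q v) • m = m →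
      ∃ a, op (arrOf k Q a) • m ≠ 0 := fun m v h1 h2 => hc m v h1 h2
  let X := {q : S × Q.A // op (arrOf k Q q.2) • q.1 ≠ 0}
  have hstep : ∀ q : X, ∃ q' : X, q'.1.1 = op (arrOf k Q q.1.2) • q.1.1 := by
    rintro ⟨⟨m, a⟩, h⟩
    obtain ⟨b, hb⟩ := harr _ (Q.tgt a) h (by
      rw [smul_smul, ← op_mul, arr_idem])
    exact ⟨⟨⟨_, b⟩, hb⟩, rfl⟩
  choose f hf using hstep
  obtain ⟨m, hm⟩ := exists_ne (0 : S)
  obtain ⟨v, hv⟩ := hex m hm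
  obtain ⟨a, ha⟩ := harr _ v hv (by rw [smul_smul, ← op_mul, idem_idem])
  let q0 : X := ⟨⟨_, a⟩, ha⟩
  obtain ⟨N, hN⟩ := hQ.2.2.2.2.2.2.2
  refine hN (fun i => (f^[i] q0).1.2) fun i _ => ?_
  have h1 := (f^[i+1] q0).2
  rw [Function.iterate_succ_apply'] at h1 ⊢
  rw [hf, smul_smul, ← op_mul] at h1
  constructor
  · by_contra hne
    rw [arr_arr_ne hne] at h1
    simp at h1
  · intro hr
    rw [arr_arr_rel hr] at h1
    simp at h1

theorem PDlt_simple (hQ : IsGentle Q) {n : ℕ}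
    (h : ∀ a, PDlt (GentleAlgebra k Q)ᵐᵒᵖ (rM (arrOf k Q a)) n)
    (S : Type) [AddCommGroup S] [Module (GentleAlgebra k Q)ᵐᵒᵖ S]
    (hS : IsSimpleModule (GentleAlgebra k Q)ᵐᵒᵖ S) :
    PDlt (GentleAlgebra k Q)ᵐᵒᵖ S (n + 1) := by
  have := IsSimpleModule.nontrivial (GentleAlgebra k Q)ᵐᵒᵖ S
  obtain ⟨m, v, hm, hmv, hma⟩ := exists_socle_vector (k := k) hQ S
  have hK0 : ∀ x ∈ KT k (Finset.univ.filter fun a => Q.src a = v), op x • m = 0 := by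
    intro x hx
    refine KT_induction (p := fun x => op x • m = 0) (by simp)
      (fun x y h1 h2 => by rw [op_add, add_smul, h1, h2, add_zero]) (fun a _ z => ?_) hx
    rw [op_mul, mul_smul, hma, smul_zero]
  refine PDlt_simple_aux (idem_idem v) hm hmv
    (K := KT k (Finset.univ.filter fun a => Q.src a = v)) (fun x => ?_) (PDlt_KT fun a _ => h a)
  constructor
  · intro hx
    refine ⟨?_, hK0 x hx⟩
    refine KT_induction (p := fun x => idemOf k Q v * x = x) (by simp)
      (fun x y h1 h2 => by rw [mul_add, h1, h2]) (fun a ha z => ?_) hx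
    have ha : Q.src a = v := by simpa using ha
    rw [← mul_assoc, ← ha, idem_arr]
  · rintro ⟨hx, hx0⟩
    obtain ⟨c, hc⟩ := exists_decomp v x
    rw [hx] at hc
    have h1 := hK0 _ hc
    rw [op_sub, sub_smul, hx0, zero_sub, neg_eq_zero] at h1
    have hc0 : c = 0 := by
      by_contra hne
      apply hm
      have h2 : op (c⁻¹ • (1 : GentleAlgebra k Q)) • op (c • idemOf k Q v) • m = 0 := by
        rw [h1, smul_zero]
      rw [smul_smul, ← op_mul, smul_mul_smul_comm, mul_inv_cancel₀ hne, mul_one, one_smul,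
        hmv] at h2
      exact h2
    rw [hc0, zero_smul, sub_zero] at hc
    exact hc

theorem isChain_of_pathEl_ne {l : List Q.A} {w : Q.V} (h : pathEl k l w ≠ 0) :
    l.IsChain (fun a b => Q.tgt a = Q.src b ∧ ¬ Q.rel a b) := by
  induction l with
  | nil => exact List.isChain_nil
  | cons a l ih =>
    have h1 : pathEl k l w ≠ 0 := by
      intro h0; exact h (by rw [pathEl, h0, mul_zero])
    rcases l with _ | ⟨b, l⟩
    · exact List.isChain_singleton _
    · refine List.isChain_cons_cons.2 ⟨⟨?_, ?_⟩, ih h1⟩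
      · by_contra hne
        exact h (by rw [pathEl, pathEl, ← mul_assoc, arr_arr_ne hne, zero_mul])
      · intro hr
        exact h (by rw [pathEl, pathEl, ← mul_assoc, arr_arr_rel hr, zero_mul])

theorem finite_gentle (hQ : IsGentle Q) : Module.Finite k (GentleAlgebra k Q) := by
  obtain ⟨N, hN⟩ := hQ.2.2.2.2.2.2.2
  have hlen : ∀ (l : List Q.A) (w : Q.V), pathEl k l w ≠ 0 → l.length < N + 1 := by
    intro l w h
    by_contra hlt
    have hch := isChain_of_pathEl_ne h
    rw [List.isChain_iff_getElem] at hch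
    have hpos : 0 < l.length := by omega
    refine hN (fun i => l.getD i l[0]) fun i hi => ?_
    have := hch i (by omega)
    rw [List.getD_eq_getElem _ _ (by omega), List.getD_eq_getElem _ _ (by omega)]
    exact this
  let B : Set (GentleAlgebra k Q) :=
    (fun p : FP Q => pathEl k p.1 p.2) '' ({l : List Q.A | l.length < N + 1} ×ˢ Set.univ)
  have hB : B.Finite :=
    ((List.finite_length_lt Q.A (N + 1)).prod Set.finite_univ).image _
  refine ⟨⟨hB.toFinset, ?_⟩⟩
  rw [Set.Finite.coe_toFinset, eq_top_iff]
  intro x _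
  rw [← psi_theta x, psi, Finsupp.linearCombination_apply]
  refine Submodule.sum_mem _ fun p _ => Submodule.smul_mem _ _ ?_
  by_cases hp : pathEl k p.1 p.2 = 0
  · simp only [hp]; exact zero_mem _
  · exact Submodule.subset_span ⟨p, ⟨hlen _ _ hp, trivial⟩, rfl⟩

theorem globalDim_lt_top_of_FPath (hQ : IsGentle Q) {n : ℕ} (h : ∀ a, ¬ FPath Q a n) :
    globalDim (GentleAlgebra k Q)ᵐᵒᵖ < ⊤ := by
  refine globalDim_lt_top_of (n := n) fun M _ _ hM => ?_
  have := finite_gentle (k := k) hQ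
  have : Module.Finite k (GentleAlgebra k Q)ᵐᵒᵖ :=
    Module.Finite.equiv (MulOpposite.opLinearEquiv k)
  have : IsArtinianRing (GentleAlgebra k Q)ᵐᵒᵖ := IsArtinianRing.of_finite k _
  refine PDlt_of_finiteLength (fun S _ _ hS =>
    PDlt_simple hQ (fun a => PDlt_arr_of_not_FPath hQ.1 n a (h a)) S hS) ?_
  rw [isFiniteLength_iff_isNoetherian_isArtinian]
  exact ⟨inferInstance, inferInstance⟩

theorem rel_unique (hQ : IsGentle Q) {a b c : Q.A} (hb : Q.rel a b) (hc : Q.rel a c) : b = c := by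
  have h := hQ.2.2.2.2.2.2.1 a
  rw [Set.ncard_le_one (Set.toFinite _)] at h
  exact h b ⟨(hQ.1 _ _ hb).symm, hb⟩ c ⟨(hQ.1 _ _ hc).symm, hc⟩

theorem rel_unique' (hQ : IsGentle Q) {a b c : Q.A} (hb : Q.rel b a) (hc : Q.rel c a) : b = c := by
  have h := hQ.2.2.2.2.1 a
  rw [Set.ncard_le_one (Set.toFinite _)] at h
  exact h b ⟨(hQ.1 _ _ hb), hb⟩ c ⟨(hQ.1 _ _ hc), hc⟩

theorem not_PDlt_of_seq (hQ : IsGentle Q) (n : ℕ) : ∀ p : ℕ → Q.A,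
    (∀ i, Q.rel (p i) (p (i + 1))) →
    ¬ PDlt (GentleAlgebra k Q)ᵐᵒᵖ (rM (arrOf k Q (p 0))) (n + 1) := by
  induction n with
  | zero =>
    intro p hp h
    exact not_projective_arr (hp 0) (hQ.1 _ _ (hp 0)) (PDlt_one_iff.1 h)
  | succ n ih =>
    intro p hp h
    have h1 := PDlt_ker_lmulR (idem_idem (k := k) (Q.tgt (p 0))) (arr_idem _)
      (mem_KT_rel_iff hQ.1 (p 0)) h
    have h2 : (Finset.univ.filter fun b => Q.rel (p 0) b) = {p 1} := by
      ext b
      simp only [Finset.mem_filter, Finset.mem_univ, true_and, Finset.mem_singleton]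
      exact ⟨fun hb => rel_unique hQ hb (hp 0), fun hb => hb ▸ hp 0⟩
    rw [h2, KT_singleton] at h1
    exact ih (fun i => p (i + 1)) (fun i => hp (i + 1)) h1

theorem FPath_mono {n m : ℕ} (hnm : n ≤ m) : ∀ {a : Q.A}, FPath Q a m → FPath Q a n := by
  induction n generalizing m with
  | zero => intro a _; trivial
  | succ n ih =>
    intro a h
    obtain ⟨m, rfl⟩ : ∃ m', m = m' + 1 := ⟨m - 1, by omega⟩
    obtain ⟨b, hb, h⟩ := h
    exact ⟨b, hb, ih (by omega) h⟩

/-- an arrow with arbitrarily long forbidden paths yields a cycle -/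
theorem exists_cycle (hQ : IsGentle Q) {a : Q.A} (ha : ∀ n, FPath Q a n) :
    ∃ ℓ : ℕ, 1 ≤ ℓ ∧ ∃ c : ZMod ℓ → Q.A, IsOCFCycle Q c ∧ Function.Injective c := by
  let S := {a : Q.A // ∀ n, FPath Q a n}
  have hstep : ∀ s : S, ∃ s' : S, Q.rel s.1 s'.1 := by
    rintro ⟨a, ha⟩
    obtain ⟨b, hb, -⟩ := ha 1
    refine ⟨⟨b, fun n => ?_⟩, hb⟩
    obtain ⟨b', hb', h⟩ := ha (n + 1)
    rw [rel_unique hQ hb hb']; exact h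
  choose f hf using hstep
  have hinj : Function.Injective f := by
    intro s t hst
    apply Subtype.ext
    have h1 := hf s
    rw [hst] at h1
    exact rel_unique' hQ h1 (hf t)
  let s : S := ⟨a, ha⟩
  have hper : s ∈ Function.periodicPts f := hinj.mem_periodicPts s
  have hpos := Function.minimalPeriod_pos_of_mem_periodicPts hper
  set ℓ := Function.minimalPeriod f s with hℓ
  have : NeZero ℓ := ⟨hpos.ne'⟩
  refine ⟨ℓ, hpos, fun i => (f^[i.val] s).1, ?_, ?_⟩
  · intro i
    have h : f^[(i + 1).val] s = f (f^[i.val] s) := by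
      have h1 : (i + 1).val = (i.val + 1) % ℓ := by
        rw [← ZMod.val_natCast]
        congr 1
        push_cast
        rw [ZMod.natCast_zmod_val]
      rw [h1]
      have h2 := Function.iterate_mod_minimalPeriod_eq (f := f) (x := s) (n := i.val + 1)
      exact h2.trans (Function.iterate_succ_apply' f _ _)
    show Q.tgt (f^[i.val] s).1 = Q.src (f^[(i + 1).val] s).1 ∧
      Q.rel (f^[i.val] s).1 (f^[(i + 1).val] s).1
    rw [h]
    exact ⟨hQ.1 _ _ (hf _), hf _⟩
  · intro i j hij
    have h := Function.iterate_injOn_Iio_minimalPeriod (f := f) (x := s)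
      (ZMod.val_lt i) (ZMod.val_lt j) (Subtype.ext hij)
    exact ZMod.val_injective ℓ h

theorem globalDim_lt_top_iff (hQ : IsGentle Q) :
    globalDim (GentleAlgebra k Q)ᵐᵒᵖ < ⊤ ↔ ∀ ℓ : ℕ, 1 ≤ ℓ → AGzero Q ℓ = 0 := by
  constructor
  · intro hfin ℓ hℓ
    have : IsEmpty (Quotient (ocfCycleSetoid Q ℓ)) := by
      constructor
      intro q
      obtain ⟨⟨c, hc, -⟩, -⟩ := Quotient.exists_rep q
      have := finite_rM (arrOf k Q (c ((0 : ℕ) : ZMod ℓ)))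
      obtain ⟨n, hn⟩ := exists_PDlt_of_globalDim
        (M := rM (arrOf k Q (c ((0 : ℕ) : ZMod ℓ)))) hfin
      refine not_PDlt_of_seq (k := k) hQ n (fun i => c i) (fun i => ?_) hn
      have := (hc i).2
      simpa using this
    rw [AGzero]
    exact Nat.card_of_isEmpty
  · intro h
    have h1 : ∀ a, ∃ n, ¬ FPath Q a n := by
      intro a
      by_contra hc
      push Not at hc
      obtain ⟨ℓ, hℓ, c, hc, hinj⟩ := exists_cycle hQ hc
      have : NeZero ℓ := ⟨by omega⟩
      have h0 := h ℓ hℓ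
      rw [AGzero, Finite.card_eq_zero_iff] at h0
      exact h0.false (Quotient.mk _ ⟨c, hc, hinj⟩)
    choose n hn using h1
    refine globalDim_lt_top_of_FPath hQ (n := Finset.univ.sup n) fun a ha => hn a ?_
    exact FPath_mono (Finset.le_sup (Finset.mem_univ a)) ha

end Final

/-- If two gentle algebras are AG-equivalent, then one has
finite global dimension if and only if the other does. -/
theorem globalDim_finite_iff_of_AG_equivalent
    (k : Type) [Field k] [IsAlgClosed k] (Q Q' : GentleData)
    (hQ : IsGentle Q) (hQ' : IsGentle Q')
    (hAG : ∀ ℓ : ℕ, AGzero Q ℓ = AGzero Q' ℓ) :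
    globalDim (GentleAlgebra k Q)ᵐᵒᵖ < ⊤ ↔ globalDim (GentleAlgebra k Q')ᵐᵒᵖ < ⊤ := by
  rw [globalDim_lt_top_iff hQ, globalDim_lt_top_iff hQ']
  simp only [hAG]
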